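/- arXiv:math/0006147 — 3 statements merged into one kernel-verified Lean document; each statement's English description precedes it below -/
import Mathlib

section
/- Let U ⊆ ℂ be open and let μ, h, v : U → ℂ be smooth. Then D_h(∂̄_μ^{(−1)} v) − ∂̄_μ^{(2)}(D_h v) = L_v(D_h μ − ∂̄h) on U, where L_v q = v·∂q + 2·(∂v)·q is the Lie derivative acting on weight-2 quantities. Explicitly: (∂³ + 2h∂ + (∂h))(∂̄v − μ∂v + (∂μ)v) − (∂̄ − μ∂ − 2(∂μ))(∂³v + 2h∂v + (∂h)v) = v·∂(D_h μ − ∂̄h) + 2(∂v)·(D_h μ − ∂̄h). -/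
open Complex MeasureTheory

/-- The Wirtinger derivative ∂u = (u_x − i·u_y)/2 of a function `u : ℂ → ℂ`. -/
noncomputable def wd (u : ℂ → ℂ) : ℂ → ℂ :=
  fun z => (fderiv ℝ u z 1 - Complex.I * fderiv ℝ u z Complex.I) / 2

/-- The conjugate Wirtinger derivative ∂̄u = (u_x + i·u_y)/2. -/
noncomputable def wdbar (u : ℂ → ℂ) : ℂ → ℂ :=
  fun z => (fderiv ℝ u z 1 + Complex.I * fderiv ℝ u z Complex.I) / 2

/-- The Schwarzian derivative {f,z} = ∂³f/∂f − (3/2)·(∂²f/∂f)² of a smooth map. -/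
noncomputable def schwarz (f : ℂ → ℂ) : ℂ → ℂ :=
  fun z => wd (wd (wd f)) z / wd f z - (3/2) * (wd (wd f) z / wd f z)^2

/-- The Schwarzian derivative S(g) = g'''/g' − (3/2)·(g''/g')² of a holomorphic map. -/
noncomputable def schwarzD (g : ℂ → ℂ) : ℂ → ℂ :=
  fun z => deriv (deriv (deriv g)) z / deriv g z - (3/2) * (deriv (deriv g) z / deriv g z)^2

/-- The operator ∂̄_μ^{(k)} u = ∂̄u − μ·∂u − k·(∂μ)·u. -/
noncomputable def dbarMu (μ : ℂ → ℂ) (k : ℤ) (u : ℂ → ℂ) : ℂ → ℂ :=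
  fun z => wdbar u z - μ z * wd u z - (k : ℂ) * wd μ z * u z

/-- The third-order operator D_h u = ∂³u + 2h·∂u + (∂h)·u. -/
noncomputable def Dop (h u : ℂ → ℂ) : ℂ → ℂ :=
  fun z => wd (wd (wd u)) z + 2 * h z * wd u z + wd h z * u z

/-- The Lie derivative on weight-2 quantities: L_v q = v·∂q + 2·(∂v)·q. -/
noncomputable def lieD (v q : ℂ → ℂ) : ℂ → ℂ :=
  fun z => v z * wd q z + 2 * wd v z * q z

/-!
Read `v` and `μ` as the `(1,0)` vector fields `v∂` and `μ∂`, with Lie bracket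
`[v, μ] = v ∂μ - μ ∂v`. Then `∂̄_μ^{(-1)} v = ∂̄v + [v, μ]` and `∂̄_μ^{(2)} q = ∂̄q - L_μ q`, so the
identity is the sum of two others. Since `∂` and `∂̄` commute, only the coefficients of `D_h`
contribute to `D_h(∂̄v) - ∂̄(D_h v) = -L_v(∂̄h)`. And `D_h` is a one-cocycle on vector fields with
values in quadratic differentials: `D_h [v, μ] = L_v(D_h μ) - L_μ(D_h v)`.
-/

open scoped Topology

lemma hasFDerivAt_fderiv_apply {𝕜 E F : Type*} [NontriviallyNormedField 𝕜]
    [NormedAddCommGroup E] [NormedSpace 𝕜 E] [NormedAddCommGroup F] [NormedSpace 𝕜 F]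
    {f : E → F} {x : E} (hf : DifferentiableAt 𝕜 (fderiv 𝕜 f) x) (a : E) :
    HasFDerivAt (fun y => fderiv 𝕜 f y a) ((fderiv 𝕜 (fderiv 𝕜 f) x).flip a) x := by
  simpa using hf.hasFDerivAt.clm_apply (hasFDerivAt_const a x)

section Wirtinger

variable {f g : ℂ → ℂ} {z : ℂ}

lemma wd_congr (hfg : f =ᶠ[𝓝 z] g) : wd f =ᶠ[𝓝 z] wd g := by
  filter_upwards [hfg.fderiv (𝕜 := ℝ)] with w hw
  simp only [wd, hw]

lemma wd_const (c : ℂ) : wd (fun _ => c) z = 0 := by simp [wd]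

lemma wdbar_const (c : ℂ) : wdbar (fun _ => c) z = 0 := by simp [wdbar]

lemma wd_add (hf : DifferentiableAt ℝ f z) (hg : DifferentiableAt ℝ g z) :
    wd (fun w => f w + g w) z = wd f z + wd g z := by
  simp only [wd, fderiv_fun_add hf hg, add_apply]
  ring

lemma wdbar_add (hf : DifferentiableAt ℝ f z) (hg : DifferentiableAt ℝ g z) :
    wdbar (fun w => f w + g w) z = wdbar f z + wdbar g z := by
  simp only [wdbar, fderiv_fun_add hf hg, add_apply]
  ring

lemma wd_sub (hf : DifferentiableAt ℝ f z) (hg : DifferentiableAt ℝ g z) :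
    wd (fun w => f w - g w) z = wd f z - wd g z := by
  simp only [wd, fderiv_fun_sub hf hg, sub_apply]
  ring

lemma wd_mul (hf : DifferentiableAt ℝ f z) (hg : DifferentiableAt ℝ g z) :
    wd (fun w => f w * g w) z = wd f z * g z + f z * wd g z := by
  simp only [wd, fderiv_fun_mul hf hg, add_apply, smul_apply, smul_eq_mul]
  ring

lemma wdbar_mul (hf : DifferentiableAt ℝ f z) (hg : DifferentiableAt ℝ g z) :
    wdbar (fun w => f w * g w) z = wdbar f z * g z + f z * wdbar g z := by
  simp only [wdbar, fderiv_fun_mul hf hg, add_apply, smul_apply, smul_eq_mul]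
  ring

lemma wd_add_eventuallyEq (hf : ContDiffAt ℝ 1 f z) (hg : ContDiffAt ℝ 1 g z) :
    wd (fun w => f w + g w) =ᶠ[𝓝 z] fun w => wd f w + wd g w := by
  filter_upwards [hf.eventually (by simp), hg.eventually (by simp)] with w hfw hgw
  exact wd_add (hfw.differentiableAt one_ne_zero) (hgw.differentiableAt one_ne_zero)

section ContDiff

variable {m n : WithTop ℕ∞}

lemma contDiffAt_wd (hf : ContDiffAt ℝ n f z) (hmn : m + 1 ≤ n := by norm_num) :
    ContDiffAt ℝ m (wd f) z := by
  have hf' := hf.fderiv_right hmn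
  unfold wd
  fun_prop

lemma contDiffAt_wdbar (hf : ContDiffAt ℝ n f z) (hmn : m + 1 ≤ n := by norm_num) :
    ContDiffAt ℝ m (wdbar f) z := by
  have hf' := hf.fderiv_right hmn
  unfold wdbar
  fun_prop

lemma contDiffAt_wd_wd (hf : ContDiffAt ℝ n f z) (hmn : m + 1 + 1 ≤ n := by norm_num) :
    ContDiffAt ℝ m (wd (wd f)) z :=
  contDiffAt_wd (contDiffAt_wd hf hmn) le_rfl

lemma contDiffAt_wd_wd_wd (hf : ContDiffAt ℝ n f z) (hmn : m + 1 + 1 + 1 ≤ n := by norm_num) :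
    ContDiffAt ℝ m (wd (wd (wd f))) z :=
  contDiffAt_wd (contDiffAt_wd_wd hf hmn) le_rfl

end ContDiff

lemma fderiv_wd_apply (hf : DifferentiableAt ℝ (fderiv ℝ f) z) (a : ℂ) :
    fderiv ℝ (wd f) z a
      = (fderiv ℝ (fderiv ℝ f) z a 1 - I * fderiv ℝ (fderiv ℝ f) z a I) / 2 := by
  have hwd : HasFDerivAt (wd f) _ z := ((hasFDerivAt_fderiv_apply hf 1).sub
    ((hasFDerivAt_fderiv_apply hf I).const_mul I)).mul_const (2 : ℂ)⁻¹
  rw [hwd.fderiv]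
  simp only [sub_apply, smul_apply, ContinuousLinearMap.flip_apply, smul_eq_mul]
  ring

lemma fderiv_wdbar_apply (hf : DifferentiableAt ℝ (fderiv ℝ f) z) (a : ℂ) :
    fderiv ℝ (wdbar f) z a
      = (fderiv ℝ (fderiv ℝ f) z a 1 + I * fderiv ℝ (fderiv ℝ f) z a I) / 2 := by
  have hwdbar : HasFDerivAt (wdbar f) _ z := ((hasFDerivAt_fderiv_apply hf 1).add
    ((hasFDerivAt_fderiv_apply hf I).const_mul I)).mul_const (2 : ℂ)⁻¹
  rw [hwdbar.fderiv]
  simp only [add_apply, smul_apply, ContinuousLinearMap.flip_apply, smul_eq_mul]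
  ring

lemma wd_wdbar_eventuallyEq (hf : ContDiffAt ℝ 2 f z) : wd (wdbar f) =ᶠ[𝓝 z] wdbar (wd f) := by
  filter_upwards [hf.eventually (by simp)] with w hfw
  have hdiff : DifferentiableAt ℝ (fderiv ℝ f) w :=
    (hfw.fderiv_right (m := 1) (by norm_num)).differentiableAt one_ne_zero
  have hsymm : fderiv ℝ (fderiv ℝ f) w 1 I = fderiv ℝ (fderiv ℝ f) w I 1 :=
    (hfw.isSymmSndFDerivAt (by simp)).eq 1 I
  rw [wd, wdbar]
  simp only [fderiv_wd_apply hdiff, fderiv_wdbar_apply hdiff, hsymm]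
  ring

lemma wd_wd_wd_wdbar (hf : ContDiffAt ℝ 4 f z) :
    wd (wd (wd (wdbar f))) z = wdbar (wd (wd (wd f))) z := by
  have h₁ : wd (wdbar f) =ᶠ[𝓝 z] wdbar (wd f) :=
    wd_wdbar_eventuallyEq (hf.of_le (by norm_num))
  have h₂ : wd (wdbar (wd f)) =ᶠ[𝓝 z] wdbar (wd (wd f)) :=
    wd_wdbar_eventuallyEq (contDiffAt_wd hf)
  have h₃ : wd (wdbar (wd (wd f))) =ᶠ[𝓝 z] wdbar (wd (wd (wd f))) :=
    wd_wdbar_eventuallyEq (contDiffAt_wd_wd hf)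
  exact ((wd_congr ((wd_congr h₁).trans h₂)).trans h₃).eq_of_nhds

end Wirtinger

/-- The coefficient of the Lie bracket `[f∂, g∂] = (f ∂g - g ∂f)∂` of two `(1,0)` vector fields,
each encoded by its coefficient function. It is the `μ`-dependent part of `dbarMu μ (-1)`. -/
noncomputable def wdBracket (f g : ℂ → ℂ) : ℂ → ℂ :=
  fun z => f z * wd g z - g z * wd f z

section Bracket

variable {f g : ℂ → ℂ} {z : ℂ}

lemma contDiffAt_wdBracket {m n : WithTop ℕ∞} (hf : ContDiffAt ℝ n f z) (hg : ContDiffAt ℝ n g z)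
    (hmn : m + 1 ≤ n := by norm_num) : ContDiffAt ℝ m (wdBracket f g) z := by
  have hm : m ≤ n := le_self_add.trans hmn
  exact ((hf.of_le hm).mul (contDiffAt_wd hg hmn)).sub ((hg.of_le hm).mul (contDiffAt_wd hf hmn))

lemma wd_wdBracket_eventuallyEq (hf : ContDiffAt ℝ 2 f z) (hg : ContDiffAt ℝ 2 g z) :
    wd (wdBracket f g) =ᶠ[𝓝 z] fun w => f w * wd (wd g) w - g w * wd (wd f) w := by
  filter_upwards [hf.eventually (by simp), hg.eventually (by simp)] with w hfw hgw
  have hf₀ := hfw.differentiableAt two_ne_zero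
  have hg₀ := hgw.differentiableAt two_ne_zero
  have hf₁ := (contDiffAt_wd hfw (m := 1)).differentiableAt one_ne_zero
  have hg₁ := (contDiffAt_wd hgw (m := 1)).differentiableAt one_ne_zero
  unfold wdBracket
  simp (disch := fun_prop) only [wd_sub, wd_mul]
  ring

lemma wd_wd_wdBracket_eventuallyEq (hf : ContDiffAt ℝ 3 f z) (hg : ContDiffAt ℝ 3 g z) :
    wd (wd (wdBracket f g)) =ᶠ[𝓝 z] fun w =>
      f w * wd (wd (wd g)) w + wd f w * wd (wd g) w
        - wd g w * wd (wd f) w - g w * wd (wd (wd f)) w := by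
  have hfirst := wd_wdBracket_eventuallyEq (hf.of_le (by norm_num)) (hg.of_le (by norm_num))
  refine (wd_congr hfirst).trans ?_
  filter_upwards [hf.eventually (by simp), hg.eventually (by simp)] with w hfw hgw
  have hf₀ := hfw.differentiableAt three_ne_zero
  have hg₀ := hgw.differentiableAt three_ne_zero
  have hf₂ := (contDiffAt_wd_wd hfw (m := 1)).differentiableAt one_ne_zero
  have hg₂ := (contDiffAt_wd_wd hgw (m := 1)).differentiableAt one_ne_zero
  simp (disch := fun_prop) only [wd_sub, wd_mul]
  ring

lemma wd_wd_wd_wdBracket (hf : ContDiffAt ℝ 4 f z) (hg : ContDiffAt ℝ 4 g z) :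
    wd (wd (wd (wdBracket f g))) z
      = f z * wd (wd (wd (wd g))) z + 2 * wd f z * wd (wd (wd g)) z
        - 2 * wd g z * wd (wd (wd f)) z - g z * wd (wd (wd (wd f))) z := by
  have hsecond := wd_wd_wdBracket_eventuallyEq (hf.of_le (by norm_num)) (hg.of_le (by norm_num))
  rw [(wd_congr hsecond).eq_of_nhds]
  have hf₀ := hf.differentiableAt four_ne_zero
  have hg₀ := hg.differentiableAt four_ne_zero
  have hf₁ := (contDiffAt_wd hf (m := 3)).differentiableAt three_ne_zero
  have hg₁ := (contDiffAt_wd hg (m := 3)).differentiableAt three_ne_zero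
  have hf₂ := (contDiffAt_wd_wd hf (m := 2)).differentiableAt two_ne_zero
  have hg₂ := (contDiffAt_wd_wd hg (m := 2)).differentiableAt two_ne_zero
  have hf₃ := (contDiffAt_wd_wd_wd hf (m := 1)).differentiableAt one_ne_zero
  have hg₃ := (contDiffAt_wd_wd_wd hg (m := 1)).differentiableAt one_ne_zero
  simp (disch := fun_prop) only [wd_add, wd_sub, wd_mul]
  ring

end Bracket

lemma dbarMu_neg_one (μ v : ℂ → ℂ) :
    dbarMu μ (-1) v = fun w => wdbar v w + wdBracket v μ w := by
  funext w
  simp only [dbarMu, wdBracket]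
  push_cast
  ring

lemma dbarMu_two (μ q : ℂ → ℂ) : dbarMu μ 2 q = fun w => wdbar q w - lieD μ q w := by
  funext w
  simp only [dbarMu, lieD]
  push_cast
  ring

section Operators

variable {f g h q v : ℂ → ℂ} {z : ℂ}

lemma lieD_sub (hf : DifferentiableAt ℝ f z) (hg : DifferentiableAt ℝ g z) :
    lieD v (fun w => f w - g w) z = lieD v f z - lieD v g z := by
  simp only [lieD, wd_sub hf hg]
  ring

lemma contDiffAt_Dop (hh : ContDiffAt ℝ 2 h z) (hf : ContDiffAt ℝ 4 f z) :
    ContDiffAt ℝ 1 (Dop h f) z := by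
  have hh₀ : ContDiffAt ℝ 1 h z := hh.of_le (by norm_num)
  have hf₀ : ContDiffAt ℝ 1 f z := hf.of_le (by norm_num)
  have hh₁ : ContDiffAt ℝ 1 (wd h) z := contDiffAt_wd hh
  have hf₁ : ContDiffAt ℝ 1 (wd f) z := contDiffAt_wd hf
  have hf₃ : ContDiffAt ℝ 1 (wd (wd (wd f))) z := contDiffAt_wd_wd_wd hf
  unfold Dop
  fun_prop

lemma Dop_add (hf : ContDiffAt ℝ 3 f z) (hg : ContDiffAt ℝ 3 g z) :
    Dop h (fun w => f w + g w) z = Dop h f z + Dop h g z := by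
  have h₁ : wd (fun w => f w + g w) =ᶠ[𝓝 z] fun w => wd f w + wd g w :=
    wd_add_eventuallyEq (hf.of_le (by norm_num)) (hg.of_le (by norm_num))
  have h₂ : wd (wd fun w => f w + g w) =ᶠ[𝓝 z] fun w => wd (wd f) w + wd (wd g) w :=
    (wd_congr h₁).trans (wd_add_eventuallyEq (contDiffAt_wd hf) (contDiffAt_wd hg))
  have h₃ : wd (wd (wd fun w => f w + g w)) =ᶠ[𝓝 z]
      fun w => wd (wd (wd f)) w + wd (wd (wd g)) w :=
    (wd_congr h₂).trans (wd_add_eventuallyEq (contDiffAt_wd_wd hf) (contDiffAt_wd_wd hg))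
  simp only [Dop, h₁.eq_of_nhds, h₃.eq_of_nhds]
  ring

lemma wd_Dop (hh : ContDiffAt ℝ 2 h z) (hf : ContDiffAt ℝ 4 f z) :
    wd (Dop h f) z = wd (wd (wd (wd f))) z + 2 * h z * wd (wd f) z + 3 * wd h z * wd f z
      + wd (wd h) z * f z := by
  have hh₀ := hh.differentiableAt two_ne_zero
  have hf₀ := hf.differentiableAt four_ne_zero
  have hh₁ := (contDiffAt_wd hh (m := 1)).differentiableAt one_ne_zero
  have hf₁ := (contDiffAt_wd hf (m := 3)).differentiableAt three_ne_zero
  have hf₃ := (contDiffAt_wd_wd_wd hf (m := 1)).differentiableAt one_ne_zero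
  unfold Dop
  simp (disch := fun_prop) only [wd_add, wd_mul, wd_const]
  ring

lemma wdbar_Dop (hh : ContDiffAt ℝ 2 h z) (hf : ContDiffAt ℝ 4 f z) :
    wdbar (Dop h f) z = Dop h (wdbar f) z + lieD f (wdbar h) z := by
  have hh₀ := hh.differentiableAt two_ne_zero
  have hf₀ := hf.differentiableAt four_ne_zero
  have hh₁ := (contDiffAt_wd hh (m := 1)).differentiableAt one_ne_zero
  have hf₁ := (contDiffAt_wd hf (m := 3)).differentiableAt three_ne_zero
  have hf₃ := (contDiffAt_wd_wd_wd hf (m := 1)).differentiableAt one_ne_zero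
  have hcomm_h : wd (wdbar h) z = wdbar (wd h) z := (wd_wdbar_eventuallyEq hh).eq_of_nhds
  have hcomm_f : wd (wdbar f) z = wdbar (wd f) z :=
    (wd_wdbar_eventuallyEq (hf.of_le (by norm_num))).eq_of_nhds
  unfold Dop lieD
  simp (disch := fun_prop) only [wdbar_add, wdbar_mul, wdbar_const, wd_wd_wd_wdbar hf, hcomm_f,
    hcomm_h]
  ring

lemma Dop_wdBracket (hh : ContDiffAt ℝ 2 h z) (hf : ContDiffAt ℝ 4 f z)
    (hg : ContDiffAt ℝ 4 g z) :
    Dop h (wdBracket f g) z = lieD f (Dop h g) z - lieD g (Dop h f) z := by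
  have hfirst := wd_wdBracket_eventuallyEq (hf.of_le (by norm_num)) (hg.of_le (by norm_num))
  simp only [lieD, wd_Dop hh hf, wd_Dop hh hg]
  simp only [Dop, wd_wd_wd_wdBracket hf hg, hfirst.eq_of_nhds, wdBracket]
  ring

end Operators

theorem stmt2_general {μ h v : ℂ → ℂ} {z : ℂ} (hμ : ContDiffAt ℝ 4 μ z) (hh : ContDiffAt ℝ 2 h z)
    (hv : ContDiffAt ℝ 4 v z) :
    Dop h (dbarMu μ (-1) v) z - dbarMu μ 2 (Dop h v) z
      = lieD v (fun w => Dop h μ w - wdbar h w) z := by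
  have hDμ : DifferentiableAt ℝ (Dop h μ) z := (contDiffAt_Dop hh hμ).differentiableAt one_ne_zero
  have hdh : DifferentiableAt ℝ (wdbar h) z :=
    (contDiffAt_wdbar hh (m := 1)).differentiableAt one_ne_zero
  calc Dop h (dbarMu μ (-1) v) z - dbarMu μ 2 (Dop h v) z
      = Dop h (wdbar v) z + Dop h (wdBracket v μ) z
          - (wdbar (Dop h v) z - lieD μ (Dop h v) z) := by
        rw [dbarMu_neg_one, dbarMu_two, Dop_add (contDiffAt_wdbar hv) (contDiffAt_wdBracket hv hμ)]
    _ = lieD v (Dop h μ) z - lieD v (wdbar h) z := by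
        rw [wdbar_Dop hh hv, Dop_wdBracket hh hv hμ]
        ring
    _ = lieD v (fun w => Dop h μ w - wdbar h w) z := (lieD_sub hDμ hdh).symm

/-- `D_h(∂̄_μ^{(−1)} v) − ∂̄_μ^{(2)}(D_h v) = L_v(D_h μ − ∂̄h)` on `U`. -/
theorem stmt2 (U : Set ℂ) (hU : IsOpen U) (μ h v : ℂ → ℂ)
    (hμ : ContDiffOn ℝ (⊤ : ℕ∞) μ U) (hh : ContDiffOn ℝ (⊤ : ℕ∞) h U) (hv : ContDiffOn ℝ (⊤ : ℕ∞) v U) :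
    ∀ z ∈ U,
      Dop h (dbarMu μ (-1) v) z - dbarMu μ 2 (Dop h v) z
        = lieD v (fun w => Dop h μ w - wdbar h w) z :=
  fun _ hz => stmt2_general
    (contDiffAt_infty.1 (hμ.contDiffAt (hU.mem_nhds hz)) 4)
    (contDiffAt_infty.1 (hh.contDiffAt (hU.mem_nhds hz)) 2)
    (contDiffAt_infty.1 (hv.contDiffAt (hU.mem_nhds hz)) 4)
end

section
/- Let U, U' ⊆ ℂ be open and let g : U → U' be holomorphic with nowhere-vanishing derivative g'. Let h, μ : U' → ℂ be smooth and define on U the quantities h̃ = (h∘g)·(g')² + S(g) and μ̃ = (μ∘g)·conj(g')/g', where S(g) = g'''/g' − (3/2)·(g''/g')². Then ∂̄h̃ − D_{h̃} μ̃ = ((∂̄h − D_h μ)∘g)·(g')²·conj(g') on U. In particular, the Euler–Lagrange density ∂̄h − D_h μ transforms as a tensor of weight (2,1) under holomorphic coordinate changes. -/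
/-!
Write `P k l u = (u ∘ g) (g')ᵏ conj(g')ˡ` and `N = g''/g'`. Since `∂ conj(g')` and `∂̄ g'` vanish,
`∂ (P k l u) = P (k+1) l (∂u) + k N · P k l u`, and similarly for `∂̄`. Moreover `N` satisfies the
Riccati equation `∂N = S(g) + N²/2`. Applying these two rules three times to a quantity of weight
`k = -1`, the powers of `N` cancel and
`∂³ (P (-1) l u) = P 2 l (∂³u) - 2 S(g) · P 0 l (∂u) + (2 N S(g) - ∂S(g)) · P (-1) l u`.
The terms in `S(g)` are exactly compensated by the Schwarzian in `h̃ = P 2 0 h + S(g)`, which makes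
`D_h` covariant. The Schwarzian does not enter `∂̄h̃` at all because it is holomorphic.
-/

open Complex MeasureTheory

open scoped Topology

/-- `HasWirtingerAt u a b z` says that `u` is real differentiable at `z` with differential
`a dz + b dz̄`. Like `HasDerivAt`, it carries differentiability along with the values `∂u = a` and
`∂̄u = b`, so that sums, products and composites need no side conditions. -/
def HasWirtingerAt (u : ℂ → ℂ) (a b z : ℂ) : Prop :=
  HasFDerivAt u (a • (1 : ℂ →L[ℝ] ℂ) + b • (Complex.conjCLE : ℂ →L[ℝ] ℂ)) z

namespace HasWirtingerAt

variable {u v : ℂ → ℂ} {a b c d z : ℂ}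

theorem fderiv_apply (hu : HasWirtingerAt u a b z) (w : ℂ) :
    fderiv ℝ u z w = a * w + b * starRingEnd ℂ w := by
  rw [HasFDerivAt.fderiv hu]
  rfl

theorem wd_eq (hu : HasWirtingerAt u a b z) : wd u z = a := by
  simp only [wd, hu.fderiv_apply, map_one, Complex.conj_I]
  linear_combination (b / 2 - a / 2) * Complex.I_mul_I

theorem wdbar_eq (hu : HasWirtingerAt u a b z) : wdbar u z = b := by
  simp only [wdbar, hu.fderiv_apply, map_one, Complex.conj_I]
  linear_combination (a / 2 - b / 2) * Complex.I_mul_I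

theorem of_differentiableAt (hu : DifferentiableAt ℝ u z) :
    HasWirtingerAt u (wd u z) (wdbar u z) z := by
  suffices hbasis : ∀ i, fderiv ℝ u z (Complex.basisOneI i) =
      wd u z * Complex.basisOneI i + wdbar u z * starRingEnd ℂ (Complex.basisOneI i) from
    hu.hasFDerivAt.congr_fderiv
      (ContinuousLinearMap.coe_injective (Complex.basisOneI.ext hbasis))
  rw [Fin.forall_fin_two, Complex.coe_basisOneI]
  constructor
  · simp only [Matrix.cons_val_zero, wd, wdbar, map_one]
    ring
  · simp only [Matrix.cons_val_one, Matrix.cons_val_fin_one, wd, wdbar, Complex.conj_I]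
    linear_combination fderiv ℝ u z Complex.I * Complex.I_mul_I

theorem of_hasDerivAt (hu : HasDerivAt u a z) : HasWirtingerAt u a 0 z := by
  refine (hu.hasFDerivAt.restrictScalars ℝ).congr_fderiv ?_
  ext w
  simp [mul_comm]

theorem conj (hu : HasWirtingerAt u a b z) :
    HasWirtingerAt (fun x => starRingEnd ℂ (u x)) (starRingEnd ℂ b) (starRingEnd ℂ a) z := by
  refine ((Complex.conjCLE : ℂ →L[ℝ] ℂ).hasFDerivAt.comp z hu).congr_fderiv ?_
  ext w
  simp [add_comm]

theorem add (hu : HasWirtingerAt u a b z) (hv : HasWirtingerAt v c d z) :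
    HasWirtingerAt (fun x => u x + v x) (a + c) (b + d) z :=
  (HasFDerivAt.fun_add hu hv).congr_fderiv (by module)

theorem mul (hu : HasWirtingerAt u a b z) (hv : HasWirtingerAt v c d z) :
    HasWirtingerAt (fun x => u x * v x) (a * v z + u z * c) (b * v z + u z * d) z :=
  (HasFDerivAt.fun_mul hu hv).congr_fderiv (by module)

theorem comp_hasDerivAt {g : ℂ → ℂ} (hu : HasWirtingerAt u a b (g z)) (hg : HasDerivAt g c z) :
    HasWirtingerAt (fun x => u (g x)) (a * c) (b * starRingEnd ℂ c) z := by
  refine (HasFDerivAt.comp z hu (hg.hasFDerivAt.restrictScalars ℝ)).congr_fderiv ?_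
  ext w
  change a * (w * c) + b * starRingEnd ℂ (w * c) =
    a * c * w + b * starRingEnd ℂ c * starRingEnd ℂ w
  rw [map_mul]
  ring

end HasWirtingerAt

theorem wd_congr_of_eventuallyEq {u v : ℂ → ℂ} {z : ℂ} (huv : u =ᶠ[𝓝 z] v) : wd u z = wd v z := by
  simp only [wd, huv.fderiv_eq]

theorem contDiffAt_wd_s8 {u : ℂ → ℂ} {z : ℂ} {m n : WithTop ℕ∞} (hu : ContDiffAt ℝ n u z)
    (hmn : m + 1 ≤ n) : ContDiffAt ℝ m (wd u) z := by
  have hfderiv (w : ℂ) : ContDiffAt ℝ m (fun x => fderiv ℝ u x w) z :=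
    (hu.fderiv_right hmn).clm_apply contDiffAt_const
  exact ((hfderiv 1).sub (contDiffAt_const.mul (hfderiv Complex.I))).div_const 2

theorem hasDerivAt_zpow_logDeriv {𝕜 : Type*} [NontriviallyNormedField 𝕜] {f : 𝕜 → 𝕜} {x : 𝕜}
    (hf : DifferentiableAt 𝕜 f x) (hx : f x ≠ 0) (k : ℤ) :
    HasDerivAt (fun y => f y ^ k) (k * logDeriv f x * f x ^ k) x := by
  refine ((hasDerivAt_zpow k (f x) (.inl hx)).comp x hf.hasDerivAt).congr_deriv ?_
  rw [logDeriv_apply, zpow_sub_one₀ hx]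
  ring

/-- The pullback of a tensor `u dzᵏ dz̄ˡ` of weight `(k, l)` under a holomorphic map `g`, namely
`(u ∘ g) (g')ᵏ conj(g')ˡ`. -/
noncomputable def tensorPullback (g : ℂ → ℂ) (k l : ℤ) (u : ℂ → ℂ) : ℂ → ℂ :=
  fun z => u (g z) * deriv g z ^ k * starRingEnd ℂ (deriv g z) ^ l

/-- The pullback of a projective connection `h` under a holomorphic map `g`: a quadratic
differential would pull back as a tensor of weight `(2, 0)`, and the Schwarzian of `g` is added. -/
noncomputable def projectivePullback (g h : ℂ → ℂ) : ℂ → ℂ :=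
  fun z => tensorPullback g 2 0 h z + schwarzD g z

section Pullback

variable {g : ℂ → ℂ} {z : ℂ}

theorem tensorPullback_mul_tensorPullback {k k' l l' : ℤ} {u v : ℂ → ℂ} (hg' : deriv g z ≠ 0) :
    tensorPullback g k l u z * tensorPullback g k' l' v z =
      tensorPullback g (k + k') (l + l') (fun w => u w * v w) z := by
  have hconj : starRingEnd ℂ (deriv g z) ≠ 0 := (map_ne_zero _).2 hg'
  simp only [tensorPullback, zpow_add₀ hg', zpow_add₀ hconj]
  ring

theorem hasWirtingerAt_tensorPullback (hg : AnalyticAt ℂ g z) (hg' : deriv g z ≠ 0) (k l : ℤ)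
    {u : ℂ → ℂ} (hu : DifferentiableAt ℝ u (g z)) :
    HasWirtingerAt (tensorPullback g k l u)
      (tensorPullback g (k + 1) l (wd u) z + k * logDeriv (deriv g) z * tensorPullback g k l u z)
      (tensorPullback g k (l + 1) (wdbar u) z +
        l * starRingEnd ℂ (logDeriv (deriv g) z) * tensorPullback g k l u z) z := by
  have hconj : starRingEnd ℂ (deriv g z) ≠ 0 := (map_ne_zero _).2 hg'
  have hpow (n : ℤ) : HasWirtingerAt (fun x => deriv g x ^ n)
      (n * logDeriv (deriv g) z * deriv g z ^ n) 0 z :=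
    .of_hasDerivAt (hasDerivAt_zpow_logDeriv hg.deriv.differentiableAt hg' n)
  have hcomp := (HasWirtingerAt.of_differentiableAt hu).comp_hasDerivAt
    hg.differentiableAt.hasDerivAt
  have hprod := (hcomp.mul (hpow k)).mul (hpow l).conj
  simp only [map_zpow₀, map_mul, map_intCast, map_zero] at hprod
  convert hprod using 1
  · rfl
  · simp only [tensorPullback, zpow_add_one₀ hg']
    ring
  · simp only [tensorPullback, zpow_add_one₀ hconj]
    ring

theorem hasDerivAt_logDeriv_deriv (hg : AnalyticAt ℂ g z) (hg' : deriv g z ≠ 0) :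
    HasDerivAt (logDeriv (deriv g)) (schwarzD g z + logDeriv (deriv g) z ^ 2 / 2) z := by
  refine (hg.deriv.deriv.differentiableAt.hasDerivAt.div
    hg.deriv.differentiableAt.hasDerivAt hg').congr_deriv ?_
  simp only [schwarzD, logDeriv_apply]
  field_simp
  ring

theorem analyticAt_schwarzD (hg : AnalyticAt ℂ g z) (hg' : deriv g z ≠ 0) :
    AnalyticAt ℂ (schwarzD g) z :=
  (hg.deriv.deriv.deriv.div hg.deriv hg').sub
    (analyticAt_const.mul ((hg.deriv.deriv.div hg.deriv hg').pow 2))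

theorem hasWirtingerAt_projectivePullback (hg : AnalyticAt ℂ g z) (hg' : deriv g z ≠ 0)
    {h : ℂ → ℂ} (hh : DifferentiableAt ℝ h (g z)) :
    HasWirtingerAt (projectivePullback g h)
      (tensorPullback g 3 0 (wd h) z + 2 * logDeriv (deriv g) z * tensorPullback g 2 0 h z +
        deriv (schwarzD g) z)
      (tensorPullback g 2 1 (wdbar h) z) z := by
  have hsum : HasWirtingerAt (projectivePullback g h) _ _ z :=
    (hasWirtingerAt_tensorPullback hg hg' 2 0 hh).add
      (.of_hasDerivAt (analyticAt_schwarzD hg hg').differentiableAt.hasDerivAt)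
  simpa using hsum

theorem eventually_analyticAt_and_deriv_ne_zero_and_contDiffAt (hg : AnalyticAt ℂ g z)
    (hg' : deriv g z ≠ 0) {u : ℂ → ℂ} {n : ℕ} (hu : ContDiffAt ℝ n u (g z)) :
    ∀ᶠ x in 𝓝 z, AnalyticAt ℂ g x ∧ deriv g x ≠ 0 ∧ ContDiffAt ℝ n u (g x) :=
  hg.eventually_analyticAt.and <| (hg.deriv.continuousAt.eventually_ne hg').and <|
    hg.continuousAt.eventually (hu.eventually (by simp))

theorem wd_wd_tensorPullback (hg : AnalyticAt ℂ g z) (hg' : deriv g z ≠ 0) (k l : ℤ)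
    {u : ℂ → ℂ} (hu : ContDiffAt ℝ 2 u (g z)) :
    wd (wd (tensorPullback g k l u)) z =
      tensorPullback g (k + 2) l (wd (wd u)) z +
        (2 * k + 1) * logDeriv (deriv g) z * tensorPullback g (k + 1) l (wd u) z +
        k * (schwarzD g z + (k + 1 / 2) * logDeriv (deriv g) z ^ 2) *
          tensorPullback g k l u z := by
  have hfirst : wd (tensorPullback g k l u) =ᶠ[𝓝 z] fun x =>
      tensorPullback g (k + 1) l (wd u) x +
        k * logDeriv (deriv g) x * tensorPullback g k l u x := by
    filter_upwards [eventually_analyticAt_and_deriv_ne_zero_and_contDiffAt hg hg' hu]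
      with x ⟨hgx, hgx', hux⟩
    exact (hasWirtingerAt_tensorPullback hgx hgx' k l (hux.differentiableAt (by simp))).wd_eq
  have hu' : DifferentiableAt ℝ (wd u) (g z) :=
    (contDiffAt_wd_s8 (m := 1) hu (by norm_num)).differentiableAt (by simp)
  have hN := HasWirtingerAt.of_hasDerivAt ((hasDerivAt_logDeriv_deriv hg hg').const_mul (k : ℂ))
  have hsecond := (hasWirtingerAt_tensorPullback hg hg' (k + 1) l hu').add
    (hN.mul (hasWirtingerAt_tensorPullback hg hg' k l (hu.differentiableAt (by simp))))
  rw [wd_congr_of_eventuallyEq hfirst, hsecond.wd_eq, add_assoc k 1 1, one_add_one_eq_two]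
  push_cast
  ring

-- Weight `-1` is the one for which the powers of `g''/g'` cancel; for Möbius maps, where
-- `S(g) = 0`, this is Bol's lemma.
theorem wd_wd_wd_tensorPullback_neg_one (hg : AnalyticAt ℂ g z) (hg' : deriv g z ≠ 0) (l : ℤ)
    {u : ℂ → ℂ} (hu : ContDiffAt ℝ 3 u (g z)) :
    wd (wd (wd (tensorPullback g (-1) l u))) z =
      tensorPullback g 2 l (wd (wd (wd u))) z -
        2 * schwarzD g z * tensorPullback g 0 l (wd u) z +
        (2 * logDeriv (deriv g) z * schwarzD g z - deriv (schwarzD g) z) *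
          tensorPullback g (-1) l u z := by
  have hsecond : wd (wd (tensorPullback g (-1) l u)) =ᶠ[𝓝 z] fun x =>
      tensorPullback g 1 l (wd (wd u)) x +
        (-logDeriv (deriv g) x * tensorPullback g 0 l (wd u) x +
          (logDeriv (deriv g) x ^ 2 / 2 - schwarzD g x) * tensorPullback g (-1) l u x) := by
    filter_upwards [eventually_analyticAt_and_deriv_ne_zero_and_contDiffAt hg hg' hu]
      with x ⟨hgx, hgx', hux⟩
    rw [wd_wd_tensorPullback hgx hgx' (-1) l (hux.of_le (by norm_num))]
    simp only [Int.reduceNeg, Int.reduceAdd, neg_add_cancel, Int.cast_neg, Int.cast_one]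
    ring
  have hu' : ContDiffAt ℝ 2 (wd u) (g z) := contDiffAt_wd_s8 hu (by norm_num)
  have hu'' : ContDiffAt ℝ 1 (wd (wd u)) (g z) := contDiffAt_wd_s8 hu' (by norm_num)
  have hN := hasDerivAt_logDeriv_deriv hg hg'
  have hS := (analyticAt_schwarzD hg hg').differentiableAt.hasDerivAt
  have hthird :=
    (hasWirtingerAt_tensorPullback hg hg' 1 l (hu''.differentiableAt (by simp))).add
      (((HasWirtingerAt.of_hasDerivAt hN.fun_neg).mul
        (hasWirtingerAt_tensorPullback hg hg' 0 l (hu'.differentiableAt (by simp)))).add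
      ((HasWirtingerAt.of_hasDerivAt (((hN.fun_pow 2).div_const 2).fun_sub hS)).mul
        (hasWirtingerAt_tensorPullback hg hg' (-1) l (hu.differentiableAt (by simp)))))
  rw [wd_congr_of_eventuallyEq hsecond, hthird.wd_eq]
  simp only [Int.reduceNeg, Int.reduceAdd, neg_add_cancel, zero_add, Int.cast_neg, Int.cast_one,
    Int.cast_zero]
  ring

theorem tensorPullback_dop (hg' : deriv g z ≠ 0) (l : ℤ) (h μ : ℂ → ℂ) :
    tensorPullback g 2 l (Dop h μ) z =
      tensorPullback g 2 l (wd (wd (wd μ))) z +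
        2 * tensorPullback g 2 0 h z * tensorPullback g 0 l (wd μ) z +
        tensorPullback g 3 0 (wd h) z * tensorPullback g (-1) l μ z := by
  rw [mul_assoc, tensorPullback_mul_tensorPullback hg', tensorPullback_mul_tensorPullback hg']
  simp only [tensorPullback, Dop, zpow_ofNat, add_zero, zero_add, Int.reduceNeg, Int.reduceAdd]
  ring

theorem dop_projectivePullback_tensorPullback (hg : AnalyticAt ℂ g z) (hg' : deriv g z ≠ 0)
    (l : ℤ) {h μ : ℂ → ℂ} (hh : DifferentiableAt ℝ h (g z)) (hμ : ContDiffAt ℝ 3 μ (g z)) :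
    Dop (projectivePullback g h) (tensorPullback g (-1) l μ) z =
      tensorPullback g 2 l (Dop h μ) z := by
  have hfirst :=
    (hasWirtingerAt_tensorPullback hg hg' (-1) l (hμ.differentiableAt (by simp))).wd_eq
  rw [tensorPullback_dop hg', Dop, wd_wd_wd_tensorPullback_neg_one hg hg' l hμ, hfirst,
    (hasWirtingerAt_projectivePullback hg hg' hh).wd_eq, projectivePullback]
  simp only [Int.reduceNeg, neg_add_cancel, Int.cast_neg, Int.cast_one]
  ring

end Pullback

theorem stmt8_general {g h μ : ℂ → ℂ} {z : ℂ} (hg : AnalyticAt ℂ g z) (hg' : deriv g z ≠ 0)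
    (hh : DifferentiableAt ℝ h (g z)) (hμ : ContDiffAt ℝ 3 μ (g z)) :
    wdbar (fun x => h (g x) * (deriv g x) ^ 2 + schwarzD g x) z
        - Dop (fun x => h (g x) * (deriv g x) ^ 2 + schwarzD g x)
            (fun x => μ (g x) * (starRingEnd ℂ) (deriv g x) / deriv g x) z
      = (wdbar h (g z) - Dop h μ (g z)) * (deriv g z) ^ 2
          * (starRingEnd ℂ) (deriv g z) := by
  have h_pullback : (fun x => h (g x) * (deriv g x) ^ 2 + schwarzD g x) =
      projectivePullback g h := by
    funext x
    simp [projectivePullback, tensorPullback, zpow_ofNat]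
  have μ_pullback : (fun x => μ (g x) * (starRingEnd ℂ) (deriv g x) / deriv g x) =
      tensorPullback g (-1) 1 μ := by
    funext x
    simp [tensorPullback, div_eq_mul_inv, mul_right_comm]
  rw [h_pullback, μ_pullback, (hasWirtingerAt_projectivePullback hg hg' hh).wdbar_eq,
    dop_projectivePullback_tensorPullback hg hg' 1 hh hμ]
  simp only [tensorPullback, zpow_ofNat]
  ring

/-- the Euler–Lagrange density `∂̄h − D_h μ` transforms as a tensor of
weight (2,1) under holomorphic changes of coordinates:
`∂̄h̃ − D_{h̃} μ̃ = ((∂̄h − D_h μ)∘g)·(g')²·conj(g')`. -/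
theorem stmt8 (U U' : Set ℂ) (hU : IsOpen U) (hU' : IsOpen U')
    (g : ℂ → ℂ) (hg : DifferentiableOn ℂ g U) (hmaps : Set.MapsTo g U U')
    (hg' : ∀ z ∈ U, deriv g z ≠ 0)
    (h μ : ℂ → ℂ) (hh : ContDiffOn ℝ (⊤ : ℕ∞) h U') (hμ : ContDiffOn ℝ (⊤ : ℕ∞) μ U') :
    ∀ z ∈ U,
      wdbar (fun x => h (g x) * (deriv g x)^2 + schwarzD g x) z
          - Dop (fun x => h (g x) * (deriv g x)^2 + schwarzD g x)
              (fun x => μ (g x) * (starRingEnd ℂ) (deriv g x) / deriv g x) z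
        = (wdbar h (g z) - Dop h μ (g z)) * (deriv g z)^2
            * (starRingEnd ℂ) (deriv g z) := by
  intro z hz
  have hU'z := hU'.mem_nhds (hmaps hz)
  exact stmt8_general (hg.analyticAt (hU.mem_nhds hz)) (hg' z hz)
    ((hh.contDiffAt hU'z).differentiableAt (by simp)) (contDiffAt_infty.1 (hμ.contDiffAt hU'z) 3)
end

section
/- Let U ⊆ ℂ be open, I ⊆ ℝ an open interval, and f : I × U → ℂ a smooth family of functions such that for each t ∈ I the Wirtinger derivative ∂f_t is nowhere vanishing on U. Set μ_t = ∂̄f_t/∂f_t and v_t = (∂_t f_t)/∂f_t. Then the variation of the Beltrami coefficient is given by ∂_t μ_t = ∂̄v_t − μ_t·∂v_t + (∂μ_t)·v_t, i.e. ∂_t μ_t = ∂̄_{μ_t}^{(−1)} v_t. -/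
/-!
With `A = ∂̄f_t`, `B = ∂f_t` and `c = ∂_t f_t`, equality of mixed partial derivatives gives
`∂_t A = ∂̄c`, `∂_t B = ∂c` and `∂̄B = ∂A`. The last identity is a compatibility condition between
`μ = A / B` and the denominator of `v = c / B`: because of it, all derivatives of `A` and `B` cancel
from `∂̄v - μ ∂v + (∂μ) v`, leaving `(∂̄c · B - A · ∂c) / B²`. By the first two identities this is
the quotient rule for `∂_t (A / B)`.
-/

open Complex MeasureTheory

open Function

section FDeriv

variable {𝕜 E F G : Type*} [NontriviallyNormedField 𝕜]
  [NormedAddCommGroup E] [NormedSpace 𝕜 E] [NormedAddCommGroup F] [NormedSpace 𝕜 F]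
  [NormedAddCommGroup G] [NormedSpace 𝕜 G]

theorem hasFDerivAt_fun_div {K : Type*} [NormedField K] [NormedAlgebra 𝕜 K] {a b : E → K}
    {a' b' : E →L[𝕜] K} {x : E} (ha : HasFDerivAt a a' x) (hb : HasFDerivAt b b' x)
    (hx : b x ≠ 0) :
    HasFDerivAt (fun y ↦ a y / b y) ((b x ^ 2)⁻¹ • (b x • a' - a x • b')) x := by
  have hinv : HasFDerivAt (fun y ↦ (b y)⁻¹) _ x := (hasFDerivAt_inv' (𝕜 := 𝕜) hx).comp x hb
  simp only [div_eq_mul_inv]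
  refine (ha.fun_mul hinv).congr_fderiv ?_
  ext h
  simp only [ContinuousLinearMap.neg_comp, smul_neg, add_apply, neg_apply, smul_apply,
    ContinuousLinearMap.comp_apply, ContinuousLinearMap.mulLeftRight_apply, smul_eq_mul, sub_apply]
  field_simp
  ring

theorem fderiv_comp_prodMk_left_apply {Φ : E × F → G} {x : E} {y : F}
    (hΦ : DifferentiableAt 𝕜 Φ (x, y)) (h : E) :
    fderiv 𝕜 (fun x' ↦ Φ (x', y)) x h = fderiv 𝕜 Φ (x, y) (h, 0) := by
  have hx : HasFDerivAt (fun x' ↦ Φ (x', y)) _ x :=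
    hΦ.hasFDerivAt.comp x (hasFDerivAt_prodMk_left x y)
  simp [hx.fderiv]

theorem fderiv_comp_prodMk_right_apply {Φ : E × F → G} {x : E} {y : F}
    (hΦ : DifferentiableAt 𝕜 Φ (x, y)) (k : F) :
    fderiv 𝕜 (fun y' ↦ Φ (x, y')) y k = fderiv 𝕜 Φ (x, y) (0, k) := by
  have hy : HasFDerivAt (fun y' ↦ Φ (x, y')) _ y :=
    hΦ.hasFDerivAt.comp y (hasFDerivAt_prodMk_right x y)
  simp [hy.fderiv]

theorem differentiableAt_fderiv {u : E → F} {x : E} (hu : ContDiffAt 𝕜 2 u x) :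
    DifferentiableAt 𝕜 (fderiv 𝕜 u) x :=
  (hu.fderiv_right (m := 1) one_add_one_eq_two.le).differentiableAt one_ne_zero

theorem differentiableAt_fderiv_apply {u : E → F} {x : E} (hu : ContDiffAt 𝕜 2 u x) (h : E) :
    DifferentiableAt 𝕜 (fun y ↦ fderiv 𝕜 u y h) x :=
  (differentiableAt_fderiv hu).clm_apply (differentiableAt_const h)

theorem differentiableAt_fderiv_param_apply {f : E → F → G} {x : E} {y : F}
    (hf : ContDiffAt 𝕜 2 (uncurry f) (x, y)) (k : F) :
    DifferentiableAt 𝕜 (fun x' ↦ fderiv 𝕜 (f x') y k) x :=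
  have hfderiv : ContDiffAt 𝕜 1 (fun x' ↦ fderiv 𝕜 (f x') y) x :=
    hf.fderiv contDiffAt_const one_add_one_eq_two.le
  (hfderiv.differentiableAt one_ne_zero).clm_apply (differentiableAt_const k)

theorem differentiableAt_deriv_param {f : 𝕜 → F → G} {t : 𝕜} {y : F}
    (hf : ContDiffAt 𝕜 2 (uncurry f) (t, y)) :
    DifferentiableAt 𝕜 (fun y' ↦ deriv (fun s ↦ f s y') t) y := by
  have hswap : ContDiffAt 𝕜 2 (uncurry fun y' s ↦ f s y') (y, t) :=
    hf.comp (y, t) (contDiffAt_snd.prodMk contDiffAt_fst)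
  exact differentiableAt_fderiv_param_apply hswap 1

end FDeriv

section MixedPartials

variable {𝕜 E F G : Type*} [RCLike 𝕜]
  [NormedAddCommGroup E] [NormedSpace 𝕜 E] [NormedAddCommGroup F] [NormedSpace 𝕜 F]
  [NormedAddCommGroup G] [NormedSpace 𝕜 G]

theorem fderiv_fderiv_apply_comm {u : E → F} {x : E} (hu : ContDiffAt 𝕜 2 u x) (h k : E) :
    fderiv 𝕜 (fun y ↦ fderiv 𝕜 u y h) x k = fderiv 𝕜 (fun y ↦ fderiv 𝕜 u y k) x h := by
  have hu' : DifferentiableAt 𝕜 (fderiv 𝕜 u) x := differentiableAt_fderiv hu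
  have hsymm : IsSymmSndFDerivAt 𝕜 u x := hu.isSymmSndFDerivAt (by simp)
  simpa [fderiv_clm_apply hu' (differentiableAt_const _)] using hsymm.eq k h

theorem fderiv_partial_comm {f : E → F → G} {x : E} {y : F}
    (hf : ContDiffAt 𝕜 2 (uncurry f) (x, y)) (h : E) (k : F) :
    fderiv 𝕜 (fun x' ↦ fderiv 𝕜 (f x') y k) x h
      = fderiv 𝕜 (fun y' ↦ fderiv 𝕜 (fun x' ↦ f x' y') x h) y k := by
  have hdiff : ∀ᶠ p in nhds (x, y), DifferentiableAt 𝕜 (uncurry f) p :=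
    (hf.eventually (by simp)).mono fun _ hp ↦ hp.differentiableAt two_ne_zero
  have hx : (fun x' ↦ fderiv 𝕜 (f x') y k)
      =ᶠ[nhds x] fun x' ↦ fderiv 𝕜 (uncurry f) (x', y) (0, k) :=
    ((Continuous.prodMk_left y).tendsto x |>.eventually hdiff).mono fun _ hp ↦
      fderiv_comp_prodMk_right_apply hp k
  have hy : (fun y' ↦ fderiv 𝕜 (fun x' ↦ f x' y') x h)
      =ᶠ[nhds y] fun y' ↦ fderiv 𝕜 (uncurry f) (x, y') (h, 0) :=
    ((Continuous.prodMk_right x).tendsto y |>.eventually hdiff).mono fun _ hp ↦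
      fderiv_comp_prodMk_left_apply hp h
  calc fderiv 𝕜 (fun x' ↦ fderiv 𝕜 (f x') y k) x h
      = fderiv 𝕜 (fun p ↦ fderiv 𝕜 (uncurry f) p (0, k)) (x, y) (h, 0) := by
        rw [hx.fderiv_eq, fderiv_comp_prodMk_left_apply (differentiableAt_fderiv_apply hf _)]
    _ = fderiv 𝕜 (fun p ↦ fderiv 𝕜 (uncurry f) p (h, 0)) (x, y) (0, k) :=
        fderiv_fderiv_apply_comm hf (0, k) (h, 0)
    _ = fderiv 𝕜 (fun y' ↦ fderiv 𝕜 (fun x' ↦ f x' y') x h) y k := by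
        rw [hy.fderiv_eq, fderiv_comp_prodMk_right_apply (differentiableAt_fderiv_apply hf _)]

theorem hasDerivAt_fderiv_param_apply {f : 𝕜 → F → G} {t : 𝕜} {y : F}
    (hf : ContDiffAt 𝕜 2 (uncurry f) (t, y)) (k : F) :
    HasDerivAt (fun s ↦ fderiv 𝕜 (f s) y k)
      (fderiv 𝕜 (fun y' ↦ deriv (fun s ↦ f s y') t) y k) t :=
  (differentiableAt_fderiv_param_apply hf k).hasDerivAt.congr_deriv (fderiv_partial_comm hf 1 k)

end MixedPartials

section Wirtinger

variable {u a b c : ℂ → ℂ} {z : ℂ}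

theorem differentiableAt_wd (hu : ContDiffAt ℝ 2 u z) : DifferentiableAt ℝ (wd u) z := by
  have hu' : DifferentiableAt ℝ (fderiv ℝ u) z := differentiableAt_fderiv hu
  unfold wd
  fun_prop

theorem differentiableAt_wdbar (hu : ContDiffAt ℝ 2 u z) : DifferentiableAt ℝ (wdbar u) z := by
  have hu' : DifferentiableAt ℝ (fderiv ℝ u) z := differentiableAt_fderiv hu
  unfold wdbar
  fun_prop

theorem wd_div (ha : DifferentiableAt ℝ a z) (hb : DifferentiableAt ℝ b z) (hz : b z ≠ 0) :
    wd (fun w ↦ a w / b w) z = (wd a z * b z - a z * wd b z) / b z ^ 2 := by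
  simp only [wd, (hasFDerivAt_fun_div ha.hasFDerivAt hb.hasFDerivAt hz).fderiv, smul_apply,
    sub_apply, smul_eq_mul]
  ring

theorem wdbar_div (ha : DifferentiableAt ℝ a z) (hb : DifferentiableAt ℝ b z) (hz : b z ≠ 0) :
    wdbar (fun w ↦ a w / b w) z = (wdbar a z * b z - a z * wdbar b z) / b z ^ 2 := by
  simp only [wdbar, (hasFDerivAt_fun_div ha.hasFDerivAt hb.hasFDerivAt hz).fderiv, smul_apply,
    sub_apply, smul_eq_mul]
  ring

theorem wdbar_wd_comm (hu : ContDiffAt ℝ 2 u z) : wdbar (wd u) z = wd (wdbar u) z := by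
  have hu' (h : ℂ) := (differentiableAt_fderiv_apply hu h).hasFDerivAt
  have hwd : HasFDerivAt (wd u) _ z := ((hu' 1).sub ((hu' I).const_mul I)).mul_const (2 : ℂ)⁻¹
  have hwdbar : HasFDerivAt (wdbar u) _ z :=
    ((hu' 1).add ((hu' I).const_mul I)).mul_const (2 : ℂ)⁻¹
  rw [wdbar, wd, hwd.fderiv, hwdbar.fderiv]
  simp only [smul_apply, sub_apply, add_apply, smul_eq_mul, fderiv_fderiv_apply_comm hu I 1]
  ring

theorem dbarMu_neg_one_div (ha : DifferentiableAt ℝ a z) (hb : DifferentiableAt ℝ b z)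
    (hc : DifferentiableAt ℝ c z) (hz : b z ≠ 0) (hab : wdbar b z = wd a z) :
    dbarMu (fun w ↦ a w / b w) (-1) (fun w ↦ c w / b w) z
      = (wdbar c z * b z - a z * wd c z) / b z ^ 2 := by
  rw [dbarMu, wdbar_div hc hb hz, wd_div hc hb hz, wd_div ha hb hz, hab]
  push_cast
  field_simp
  ring

end Wirtinger

section Family

variable {f : ℝ → ℂ → ℂ} {t : ℝ} {z : ℂ}

theorem hasDerivAt_wd_param (hf : ContDiffAt ℝ 2 (uncurry f) (t, z)) :
    HasDerivAt (fun s ↦ wd (f s) z) (wd (fun w ↦ deriv (fun s ↦ f s w) t) z) t :=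
  ((hasDerivAt_fderiv_param_apply hf 1).sub
    ((hasDerivAt_fderiv_param_apply hf I).const_mul I)).div_const 2

theorem hasDerivAt_wdbar_param (hf : ContDiffAt ℝ 2 (uncurry f) (t, z)) :
    HasDerivAt (fun s ↦ wdbar (f s) z) (wdbar (fun w ↦ deriv (fun s ↦ f s w) t) z) t :=
  ((hasDerivAt_fderiv_param_apply hf 1).add
    ((hasDerivAt_fderiv_param_apply hf I).const_mul I)).div_const 2

end Family

theorem stmt9_general {f : ℝ → ℂ → ℂ} {t : ℝ} {z : ℂ}
    (hf : ContDiffAt ℝ 2 (uncurry f) (t, z)) (hz : wd (f t) z ≠ 0) :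
    deriv (fun s ↦ wdbar (f s) z / wd (f s) z) t
      = dbarMu (fun w ↦ wdbar (f t) w / wd (f t) w) (-1)
          (fun w ↦ deriv (fun s ↦ f s w) t / wd (f t) w) z := by
  have hft : ContDiffAt ℝ 2 (f t) z := hf.comp z (contDiffAt_const.prodMk contDiffAt_id)
  rw [((hasDerivAt_wdbar_param hf).fun_div (hasDerivAt_wd_param hf) hz).deriv,
    dbarMu_neg_one_div (differentiableAt_wdbar hft) (differentiableAt_wd hft)
      (differentiableAt_deriv_param hf) hz (wdbar_wd_comm hft)]

/-- for a smooth family `f t` with `∂f_t ≠ 0`, setting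
`μ_t = ∂̄f_t/∂f_t` and `v_t = ∂_t f_t/∂f_t`, one has `∂_t μ_t = ∂̄_{μ_t}^{(−1)} v_t`. -/
theorem stmt9 (U : Set ℂ) (hU : IsOpen U) (I : Set ℝ)
    (hI : ∃ a b : ℝ, I = Set.Ioo a b)
    (f : ℝ → ℂ → ℂ)
    (hf : ContDiffOn ℝ (⊤ : ℕ∞) (fun p : ℝ × ℂ => f p.1 p.2) (I ×ˢ U))
    (hf' : ∀ t ∈ I, ∀ z ∈ U, wd (f t) z ≠ 0) :
    ∀ t ∈ I, ∀ z ∈ U,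
      deriv (fun s => wdbar (f s) z / wd (f s) z) t
        = dbarMu (fun w => wdbar (f t) w / wd (f t) w) (-1)
            (fun w => deriv (fun s => f s w) t / wd (f t) w) z := by
  obtain ⟨a, b, rfl⟩ := hI
  exact fun t ht z hz ↦ stmt9_general
    ((hf.contDiffAt ((isOpen_Ioo.prod hU).mem_nhds ⟨ht, hz⟩)).of_le (by norm_cast)) (hf' t ht z hz)
end
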